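/- A pseudo symmetric measure ξ is universally optimal if and only if both of the following hold: (i) Σ_{s∈Q} p_s (c_{s01} + x* c_{s11}) = 0, and (ii) p_s = 0 for every block array s ∉ Q. -/

import Mathlib

open Matrix

namespace TwoDim

/-- The set of plots of an `a × b` block. -/
abbrev Plot (a b : ℕ) := Fin a × Fin b

/-- A block array: an assignment of one of `t` treatments to each plot. -/
abbrev BlockArray (a b t : ℕ) := Plot a b → Fin t

/-- The all-ones matrix. -/
def Jmat (n : Type*) : Matrix n n ℝ := Matrix.of fun _ _ => 1

/-- `B_m = I - J/m`. -/
noncomputable def Bmat (n : Type*) [Fintype n] [DecidableEq n] : Matrix n n ℝ :=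
  1 - ((Fintype.card n : ℝ))⁻¹ • Jmat n

variable {a b t : ℕ}

/-- The treatment incidence matrix `T_s`. -/
def Tmat (s : BlockArray a b t) : Matrix (Plot a b) (Fin t) ℝ :=
  Matrix.of fun q k => if s q = k then 1 else 0

/-- Two plots are neighbors if they agree in one coordinate and differ by 1 in the other. -/
def Neighbor (q r : Plot a b) : Prop :=
  (q.1 = r.1 ∧ (q.2.val + 1 = r.2.val ∨ r.2.val + 1 = q.2.val)) ∨
  (q.2 = r.2 ∧ (q.1.val + 1 = r.1.val ∨ r.1.val + 1 = q.1.val))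

instance (q r : Plot a b) : Decidable (Neighbor q r) := by
  unfold Neighbor; infer_instance

/-- The adjacency matrix of the neighbor relation. -/
def Mmat (a b : ℕ) : Matrix (Plot a b) (Plot a b) ℝ :=
  Matrix.of fun q r => if Neighbor q r then 1 else 0

/-- `F_s = M T_s`. -/
def Fmat (s : BlockArray a b t) : Matrix (Plot a b) (Fin t) ℝ :=
  Mmat a b * Tmat s

/-- `B̃ = Σ⁻¹ − Σ⁻¹ J Σ⁻¹ / (1'Σ⁻¹1)`. -/
noncomputable def Btilde (Sig : Matrix (Plot a b) (Plot a b) ℝ) :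
    Matrix (Plot a b) (Plot a b) ℝ :=
  Sig⁻¹ - (∑ i, ∑ j, Sig⁻¹ i j)⁻¹ • (Sig⁻¹ * Jmat (Plot a b) * Sig⁻¹)

/-- `C_{s00} = T_s' W T_s` (with `W` playing the role of `B̃`). -/
def Cs00 (W : Matrix (Plot a b) (Plot a b) ℝ) (s : BlockArray a b t) :
    Matrix (Fin t) (Fin t) ℝ := (Tmat s)ᵀ * W * Tmat s

/-- `C_{s01} = T_s' W F_s`. -/
def Cs01 (W : Matrix (Plot a b) (Plot a b) ℝ) (s : BlockArray a b t) :
    Matrix (Fin t) (Fin t) ℝ := (Tmat s)ᵀ * W * Fmat s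

/-- `C_{s11} = F_s' W F_s`. -/
def Cs11 (W : Matrix (Plot a b) (Plot a b) ℝ) (s : BlockArray a b t) :
    Matrix (Fin t) (Fin t) ℝ := (Fmat s)ᵀ * W * Fmat s

/-- `c_{s00} = tr(B_t C_{s00})`. -/
noncomputable def cs00 (W : Matrix (Plot a b) (Plot a b) ℝ) (s : BlockArray a b t) : ℝ :=
  Matrix.trace (Bmat (Fin t) * Cs00 W s)

noncomputable def cs01 (W : Matrix (Plot a b) (Plot a b) ℝ) (s : BlockArray a b t) : ℝ :=
  Matrix.trace (Bmat (Fin t) * Cs01 W s)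

noncomputable def cs11 (W : Matrix (Plot a b) (Plot a b) ℝ) (s : BlockArray a b t) : ℝ :=
  Matrix.trace (Bmat (Fin t) * Cs11 W s)

/-- The quadratic `q_s(x) = c_{s00} + 2 c_{s01} x + c_{s11} x²`. -/
noncomputable def qpoly (W : Matrix (Plot a b) (Plot a b) ℝ) (s : BlockArray a b t) (x : ℝ) : ℝ :=
  cs00 W s + 2 * cs01 W s * x + cs11 W s * x ^ 2

/-- A measure on the set of block arrays: nonnegative weights summing to one. -/
def IsMeasure (ξ : BlockArray a b t → ℝ) : Prop :=
  (∀ s, 0 ≤ ξ s) ∧ ∑ s, ξ s = 1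

noncomputable def Cm00 (W : Matrix (Plot a b) (Plot a b) ℝ) (ξ : BlockArray a b t → ℝ) :
    Matrix (Fin t) (Fin t) ℝ := ∑ s, ξ s • Cs00 W s

noncomputable def Cm01 (W : Matrix (Plot a b) (Plot a b) ℝ) (ξ : BlockArray a b t → ℝ) :
    Matrix (Fin t) (Fin t) ℝ := ∑ s, ξ s • Cs01 W s

noncomputable def Cm11 (W : Matrix (Plot a b) (Plot a b) ℝ) (ξ : BlockArray a b t → ℝ) :
    Matrix (Fin t) (Fin t) ℝ := ∑ s, ξ s • Cs11 W s

noncomputable def cm00 (W : Matrix (Plot a b) (Plot a b) ℝ) (ξ : BlockArray a b t → ℝ) : ℝ :=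
  ∑ s, ξ s * cs00 W s

noncomputable def cm01 (W : Matrix (Plot a b) (Plot a b) ℝ) (ξ : BlockArray a b t → ℝ) : ℝ :=
  ∑ s, ξ s * cs01 W s

noncomputable def cm11 (W : Matrix (Plot a b) (Plot a b) ℝ) (ξ : BlockArray a b t → ℝ) : ℝ :=
  ∑ s, ξ s * cs11 W s

/-- `q*_ξ = c_{ξ00} − c_{ξ01}²/c_{ξ11}`. -/
noncomputable def qstar (W : Matrix (Plot a b) (Plot a b) ℝ) (ξ : BlockArray a b t → ℝ) : ℝ :=
  cm00 W ξ - (cm01 W ξ) ^ 2 / cm11 W ξ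

/-- `G` is a generalized inverse of `A`. -/
def IsGenInv (A G : Matrix (Fin t) (Fin t) ℝ) : Prop := A * G * A = A

/-- Information matrix `C_{ξ00} − C_{ξ01} G C_{ξ10}` computed with a generalized inverse `G`. -/
noncomputable def InfoMat (W : Matrix (Plot a b) (Plot a b) ℝ) (ξ : BlockArray a b t → ℝ)
    (G : Matrix (Fin t) (Fin t) ℝ) : Matrix (Fin t) (Fin t) ℝ :=
  Cm00 W ξ - Cm01 W ξ * G * (Cm01 W ξ)ᵀ

/-- A criterion `Φ` on `t×t` real symmetric matrices: concave, Loewner-nondecreasing, and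
invariant under simultaneous permutations of rows and columns. -/
def GoodPhi (t : ℕ) (Φ : Matrix (Fin t) (Fin t) ℝ → ℝ) : Prop :=
  (∀ A B : Matrix (Fin t) (Fin t) ℝ, A.IsSymm → B.IsSymm → ∀ α : ℝ, 0 ≤ α → α ≤ 1 →
      α * Φ A + (1 - α) * Φ B ≤ Φ (α • A + (1 - α) • B)) ∧
  (∀ A B : Matrix (Fin t) (Fin t) ℝ, A.IsSymm → B.IsSymm → (B - A).PosSemidef → Φ A ≤ Φ B) ∧
  (∀ (σ : Equiv.Perm (Fin t)) (C : Matrix (Fin t) (Fin t) ℝ), Φ (C.submatrix σ σ) = Φ C)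

/-- Universal optimality of a measure `ξ`. -/
def UnivOptimal (W : Matrix (Plot a b) (Plot a b) ℝ) (ξ : BlockArray a b t → ℝ) : Prop :=
  ∀ η : BlockArray a b t → ℝ, IsMeasure η →
    ∀ G H : Matrix (Fin t) (Fin t) ℝ, IsGenInv (Cm11 W ξ) G → IsGenInv (Cm11 W η) H →
      ∀ Φ : Matrix (Fin t) (Fin t) ℝ → ℝ, GoodPhi t Φ →
        Φ (InfoMat W η H) ≤ Φ (InfoMat W ξ G)

/-- A measure is symmetric if it is invariant under relabeling of the treatments. -/
def IsSymmetricMeasure (ξ : BlockArray a b t → ℝ) : Prop :=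
  ∀ (σ : Equiv.Perm (Fin t)) (s : BlockArray a b t), ξ (fun q => σ (s q)) = ξ s

/-- A matrix is completely symmetric if it is of the form `αI + βJ`. -/
def ComplSym (A : Matrix (Fin t) (Fin t) ℝ) : Prop :=
  ∃ α β : ℝ, A = α • (1 : Matrix (Fin t) (Fin t) ℝ) + β • Jmat (Fin t)

/-- A measure is pseudo symmetric if `C_{ξ00}`, `C_{ξ01}`, `C_{ξ11}` are completely symmetric. -/
def PseudoSym (W : Matrix (Plot a b) (Plot a b) ℝ) (ξ : BlockArray a b t → ℝ) : Prop :=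
  ComplSym (Cm00 W ξ) ∧ ComplSym (Cm01 W ξ) ∧ ComplSym (Cm11 W ξ)

/-- `r(x) = max_{s∈S} q_s(x)`. -/
noncomputable def rfun {a b : ℕ} (t : ℕ) (W : Matrix (Plot a b) (Plot a b) ℝ) (x : ℝ) : ℝ :=
  sSup (Set.range fun s : BlockArray a b t => qpoly W s x)

/-- `min_{s∈S} q_s(x)`. -/
noncomputable def rmin {a b : ℕ} (t : ℕ) (W : Matrix (Plot a b) (Plot a b) ℝ) (x : ℝ) : ℝ :=
  sInf (Set.range fun s : BlockArray a b t => qpoly W s x)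

/-- Number of plots assigned treatment `k` by `s`. -/
noncomputable def f0 (s : BlockArray a b t) (k : Fin t) : ℕ :=
  {q : Plot a b | s q = k}.ncard

/-- Replications of `k` among the columns `1,…,b−1`. -/
noncomputable def f1 (s : BlockArray a b t) (k : Fin t) : ℕ :=
  {q : Plot a b | s q = k ∧ q.2.val + 1 < b}.ncard

/-- Replications of `k` among the columns `2,…,b`. -/
noncomputable def f2 (s : BlockArray a b t) (k : Fin t) : ℕ :=
  {q : Plot a b | s q = k ∧ 1 ≤ q.2.val}.ncard

/-- Replications of `k` among the rows `1,…,a−1`. -/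
noncomputable def f3 (s : BlockArray a b t) (k : Fin t) : ℕ :=
  {q : Plot a b | s q = k ∧ q.1.val + 1 < a}.ncard

/-- Replications of `k` among the rows `2,…,a`. -/
noncomputable def f4 (s : BlockArray a b t) (k : Fin t) : ℕ :=
  {q : Plot a b | s q = k ∧ 1 ≤ q.1.val}.ncard

noncomputable def fc (s : BlockArray a b t) : ℕ → Fin t → ℕ
  | 0 => f0 s
  | 1 => f1 s
  | 2 => f2 s
  | 3 => f3 s
  | 4 => f4 s
  | _ => fun _ => 0

/-- `h^{uv}_s = Σ_k f^u_{s,k} f^v_{s,k}`. -/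
noncomputable def hval (s : BlockArray a b t) (u v : ℕ) : ℝ :=
  ∑ k : Fin t, (fc s u k : ℝ) * (fc s v k : ℝ)

noncomputable def h00 (s : BlockArray a b t) : ℝ := hval s 0 0

noncomputable def h1 (s : BlockArray a b t) : ℝ :=
  hval s 0 1 + hval s 0 2 + hval s 0 3 + hval s 0 4

noncomputable def h2 (s : BlockArray a b t) : ℝ :=
  hval s 1 1 + hval s 2 2 + hval s 3 3 + hval s 4 4

noncomputable def h3 (s : BlockArray a b t) : ℝ :=
  hval s 1 2 + hval s 1 3 + hval s 1 4 + hval s 2 3 + hval s 2 4 + hval s 3 4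

/-- `z¹_{s,r}`: horizontally adjacent pairs of plots receiving the same treatment. -/
noncomputable def zr1 (s : BlockArray a b t) : ℕ :=
  {qr : Plot a b × Plot a b |
    qr.1.1 = qr.2.1 ∧ qr.1.2.val + 1 = qr.2.2.val ∧ s qr.1 = s qr.2}.ncard

noncomputable def zr2 (s : BlockArray a b t) : ℕ :=
  {qr : Plot a b × Plot a b |
    qr.1.1 = qr.2.1 ∧ qr.1.2.val + 2 = qr.2.2.val ∧ s qr.1 = s qr.2}.ncard

noncomputable def zc1 (s : BlockArray a b t) : ℕ :=
  {qr : Plot a b × Plot a b |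
    qr.1.2 = qr.2.2 ∧ qr.1.1.val + 1 = qr.2.1.val ∧ s qr.1 = s qr.2}.ncard

noncomputable def zc2 (s : BlockArray a b t) : ℕ :=
  {qr : Plot a b × Plot a b |
    qr.1.2 = qr.2.2 ∧ qr.1.1.val + 2 = qr.2.1.val ∧ s qr.1 = s qr.2}.ncard

/-- pairs `(i,j)`, `(i−1,j+1)` with the same treatment. -/
noncomputable def zd1 (s : BlockArray a b t) : ℕ :=
  {qr : Plot a b × Plot a b |
    qr.2.1.val + 1 = qr.1.1.val ∧ qr.1.2.val + 1 = qr.2.2.val ∧ s qr.1 = s qr.2}.ncard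

/-- pairs `(i,j)`, `(i+1,j+1)` with the same treatment. -/
noncomputable def zd2 (s : BlockArray a b t) : ℕ :=
  {qr : Plot a b × Plot a b |
    qr.1.1.val + 1 = qr.2.1.val ∧ qr.1.2.val + 1 = qr.2.2.val ∧ s qr.1 = s qr.2}.ncard

noncomputable def z1 (s : BlockArray a b t) : ℝ := 2 * zr1 s + 2 * zc1 s

noncomputable def z2 (s : BlockArray a b t) : ℝ :=
  2 * zr2 s + 2 * zc2 s + 4 * zd1 s + 4 * zd2 s

/-- `η = 4p − 2a − 2b − 2(8ab − 7a − 7b + 4)/t + 4(2p − a − b)²/(pt)` where `p = ab`. -/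
noncomputable def eta (a b t : ℕ) : ℝ :=
  4 * ((a : ℝ) * b) - 2 * a - 2 * b - 2 * (8 * (a : ℝ) * b - 7 * a - 7 * b + 4) / t +
    4 * (2 * (a : ℝ) * b - a - b) ^ 2 / (((a : ℝ) * b) * t)

/-- A corner plot of the `a × b` block. -/
def IsCorner (q : Plot a b) : Prop :=
  (q.1.val = 0 ∨ q.1.val + 1 = a) ∧ (q.2.val = 0 ∨ q.2.val + 1 = b)

/-- Treatment `k` is significant in `s`: it occupies exactly two plots, which are
neighbors, at least one of them being a corner plot. -/
def Significant (s : BlockArray a b t) (k : Fin t) : Prop :=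
  ∃ u v : Plot a b, u ≠ v ∧ {q : Plot a b | s q = k} = {u, v} ∧
    Neighbor u v ∧ (IsCorner u ∨ IsCorner v)

/-- Treatment `k` is strictly significant in `s`: both of its two plots are corners. -/
def StrictSignificant (s : BlockArray a b t) (k : Fin t) : Prop :=
  ∃ u v : Plot a b, u ≠ v ∧ {q : Plot a b | s q = k} = {u, v} ∧
    Neighbor u v ∧ IsCorner u ∧ IsCorner v

/-- `Q_i`: block arrays with exactly `i` significant treatments in which every other
treatment appears at most once. -/
def Qset (a b t : ℕ) (i : ℕ) : Set (BlockArray a b t) :=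
  {s | {k : Fin t | Significant s k}.ncard = i ∧
       ∀ k : Fin t, ¬ Significant s k → f0 s k ≤ 1}

/-- `Q_j*`: members of `Q_j` whose significant treatments are all strictly significant. -/
def QsetStar (a b t : ℕ) (j : ℕ) : Set (BlockArray a b t) :=
  {s | s ∈ Qset a b t j ∧ ∀ k : Fin t, Significant s k → StrictSignificant s k}

/-- Treatment `k` is connected in `s`. -/
def ConnectedIn (s : BlockArray a b t) (k : Fin t) : Prop :=
  ∀ q r : Plot a b, s q = k → s r = k →
    Relation.ReflTransGen (fun u v => Neighbor u v ∧ s u = k ∧ s v = k) q r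

/-! ### Auxiliary facts on the projector `B_t` and completely symmetric matrices -/

lemma aux_Jmat_sq : Jmat (Fin t) * Jmat (Fin t) = (t : ℝ) • Jmat (Fin t) := by
  ext i j; simp [Jmat, Matrix.mul_apply]

lemma aux_trB (C : Matrix (Fin t) (Fin t) ℝ) :
    Matrix.trace (Bmat (Fin t) * C) = Matrix.trace C - (t : ℝ)⁻¹ * ∑ i, ∑ j, C i j := by
  have h : Matrix.trace (Jmat (Fin t) * C) = ∑ i, ∑ j, C i j := by
    simp only [Matrix.trace, Matrix.diag, Matrix.mul_apply, Jmat, Matrix.of_apply, one_mul]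
    rw [Finset.sum_comm]
  simp [Bmat, sub_mul, Matrix.trace_sub, h]

lemma aux_trB_submatrix (C : Matrix (Fin t) (Fin t) ℝ) (σ : Equiv.Perm (Fin t)) :
    Matrix.trace (Bmat (Fin t) * C.submatrix σ σ) = Matrix.trace (Bmat (Fin t) * C) := by
  rw [aux_trB, aux_trB]
  congr 1
  · simp only [Matrix.trace, Matrix.diag, Matrix.submatrix_apply]
    exact Equiv.sum_comp σ (fun i => C i i)
  · congr 1
    simp only [Matrix.submatrix_apply]
    rw [← Equiv.sum_comp σ (fun i => ∑ j, C i j)]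
    exact Finset.sum_congr rfl fun i _ => Equiv.sum_comp σ (fun j => C (σ i) j)

lemma aux_B_J (ht : 2 ≤ t) : Bmat (Fin t) * Jmat (Fin t) = 0 := by
  have h : (t : ℝ) ≠ 0 := by positivity
  simp [Bmat, sub_mul, aux_Jmat_sq, smul_smul, h]

lemma aux_J_B (ht : 2 ≤ t) : Jmat (Fin t) * Bmat (Fin t) = 0 := by
  have h : (t : ℝ) ≠ 0 := by positivity
  simp [Bmat, mul_sub, aux_Jmat_sq, smul_smul, h]

lemma aux_B_B (ht : 2 ≤ t) : Bmat (Fin t) * Bmat (Fin t) = Bmat (Fin t) := by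
  nth_rewrite 2 [Bmat]
  simp [mul_sub, aux_B_J ht]

lemma aux_B_symm : (Bmat (Fin t))ᵀ = Bmat (Fin t) := by
  have : (Jmat (Fin t))ᵀ = Jmat (Fin t) := by ext; simp [Jmat]
  simp [Bmat, this]

lemma aux_tr_B (ht : 2 ≤ t) : Matrix.trace (Bmat (Fin t)) = (t : ℝ) - 1 := by
  have h : (t : ℝ) ≠ 0 := by positivity
  simp [Bmat, Jmat, Matrix.trace, h]

lemma aux_B_ne (ht : 2 ≤ t) : Bmat (Fin t) ≠ 0 := by
  intro h
  have h1 := aux_tr_B ht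
  have : (2 : ℝ) ≤ t := by exact_mod_cast ht
  rw [h] at h1
  simp at h1
  linarith

lemma aux_B_psd (ht : 2 ≤ t) : (Bmat (Fin t)).PosSemidef := by
  have h := Matrix.posSemidef_conjTranspose_mul_self (Bmat (Fin t))
  rwa [Matrix.conjTranspose_eq_transpose_of_trivial, aux_B_symm, aux_B_B ht] at h

lemma aux_trB_compl (ht : 2 ≤ t) (α β : ℝ) :
    Matrix.trace (Bmat (Fin t) * (α • (1 : Matrix (Fin t) (Fin t) ℝ) + β • Jmat (Fin t)))
      = α * ((t : ℝ) - 1) := by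
  simp [mul_add, aux_B_J ht, aux_tr_B ht]

/-- A completely symmetric matrix killed by `J` from the left is a multiple of `B_t`. -/
lemma aux_compl_zero (ht : 2 ≤ t) {A : Matrix (Fin t) (Fin t) ℝ} (hA : ComplSym A)
    (h0 : Jmat (Fin t) * A = 0) :
    ∃ α : ℝ, A = α • Bmat (Fin t) ∧ Matrix.trace (Bmat (Fin t) * A) = α * ((t : ℝ) - 1) := by
  obtain ⟨α, β, rfl⟩ := hA
  have h : (t : ℝ) ≠ 0 := by positivity
  refine ⟨α, ?_, aux_trB_compl ht α β⟩
  have hpos : 0 < t := by omega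
  have h1 := congrFun (congrFun h0 ⟨0, hpos⟩) ⟨0, hpos⟩
  simp [mul_add, aux_Jmat_sq, smul_smul] at h1
  simp [Jmat] at h1
  have hβ : β = - (α * (t : ℝ)⁻¹) := by field_simp; linarith
  rw [hβ]
  simp [Bmat, smul_sub, smul_smul, sub_eq_add_neg]

/-- A permutation invariant matrix is completely symmetric. -/
lemma aux_inv_compl (ht : 2 ≤ t) {A : Matrix (Fin t) (Fin t) ℝ}
    (hA : ∀ σ : Equiv.Perm (Fin t), A.submatrix σ σ = A) : ComplSym A := by
  have hA' : ∀ (σ : Equiv.Perm (Fin t)) i j, A (σ i) (σ j) = A i j := fun σ i j =>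
    congrFun (congrFun (hA σ) i) j
  set z : Fin t := ⟨0, by omega⟩ with hz
  set o : Fin t := ⟨1, by omega⟩ with ho
  have hzo : z ≠ o := by simp [hz, ho]
  refine ⟨A z z - A z o, A z o, ?_⟩
  ext i j
  by_cases hij : i = j
  · subst hij
    have := hA' (Equiv.swap z i) z z
    simp at this
    simp [Jmat, this]
  · have h2 : A i j = A z o := by
      have h3 : Equiv.swap z i o ≠ i := by
        intro h
        have : o = z := by
          have h5 := congrArg (Equiv.swap z i) h
          simpa only [Equiv.swap_apply_right, Equiv.swap_apply_self] using h5
        exact hzo this.symm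
      have := hA' (Equiv.swap z i * 1) z o
      have h4 := hA' (Equiv.swap (Equiv.swap z i o) j * Equiv.swap z i) z o
      simp only [Equiv.Perm.mul_apply, Equiv.swap_apply_left] at h4
      rw [Equiv.swap_apply_of_ne_of_ne h3.symm hij] at h4
      exact h4
    simp [Jmat, hij, h2]

lemma aux_geninv_compl (ht : 2 ≤ t) {A : Matrix (Fin t) (Fin t) ℝ} (hA : ComplSym A) :
    ∃ G, IsGenInv A G := by
  obtain ⟨α, β, rfl⟩ := hA
  have h : (t : ℝ) ≠ 0 := by positivity
  set γ : ℝ := α * (t : ℝ)⁻¹ + β with hγ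
  have hE : α • (1 : Matrix (Fin t) (Fin t) ℝ) + β • Jmat (Fin t)
      = α • Bmat (Fin t) + γ • Jmat (Fin t) := by
    simp [Bmat, smul_sub, smul_smul, hγ, add_smul]
    abel
  refine ⟨α⁻¹ • Bmat (Fin t) + (γ⁻¹ * ((t : ℝ)⁻¹ * (t : ℝ)⁻¹)) • Jmat (Fin t), ?_⟩
  rw [hE]
  unfold IsGenInv
  simp only [mul_add, add_mul, Matrix.smul_mul, Matrix.mul_smul, aux_B_B ht, aux_B_J ht,
    aux_J_B ht, aux_Jmat_sq, smul_zero, add_zero, zero_add, smul_smul]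
  congr 2
  · by_cases h0 : α = 0
    · simp [h0]
    · field_simp
  · by_cases h0 : γ = 0
    · simp [h0]
    · field_simp

/-! ### Linear algebra of the generalized Schur complement -/

section Schur
variable {n : Type*} [Fintype n]

lemma aux_FG (F : Matrix n (Fin t) ℝ) (G : Matrix (Fin t) (Fin t) ℝ)
    (hG : IsGenInv (Fᵀ * F) G) : F * G * (Fᵀ * F) = F := by
  have h : (Fᴴ * F) * (G * (Fᵀ * F) - 1) = 0 := by
    rw [Matrix.conjTranspose_eq_transpose_of_trivial, mul_sub, ← mul_assoc, hG, mul_one, sub_self]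
  rw [Matrix.conjTranspose_mul_self_mul_eq_zero, Matrix.mul_sub, Matrix.mul_one, sub_eq_zero,
    ← Matrix.mul_assoc] at h
  exact h

lemma aux_P_symm (F : Matrix n (Fin t) ℝ) (G : Matrix (Fin t) (Fin t) ℝ)
    (hG : IsGenInv (Fᵀ * F) G) : (F * G * Fᵀ)ᵀ = F * G * Fᵀ := by
  have h := aux_FG F G hG
  have h1 : F * G * Fᵀ * (F * G * Fᵀ)ᵀ = (F * G * Fᵀ)ᵀ := by
    have : F * G * Fᵀ * (F * G * Fᵀ)ᵀ = (F * G * (Fᵀ * F)) * Gᵀ * Fᵀ := by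
      simp [Matrix.transpose_mul, Matrix.mul_assoc]
    rw [this, h]
    simp [Matrix.transpose_mul, Matrix.mul_assoc]
  have h2 := congrArg Matrix.transpose h1
  rw [Matrix.transpose_mul, Matrix.transpose_transpose, h1] at h2
  exact h2

lemma aux_schur (T F : Matrix n (Fin t) ℝ) (G : Matrix (Fin t) (Fin t) ℝ)
    (hG : IsGenInv (Fᵀ * F) G) (x : ℝ) :
    Tᵀ * T + x • (Tᵀ * F + Fᵀ * T) + x ^ 2 • (Fᵀ * F) - (Tᵀ * T - Tᵀ * F * G * (Tᵀ * F)ᵀ)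
      = (F * G * Fᵀ * T + x • F)ᵀ * (F * G * Fᵀ * T + x • F) := by
  have hF := aux_FG F G hG
  have hS := aux_P_symm F G hG
  have hPF : F * G * Fᵀ * F = F := by rw [Matrix.mul_assoc, hF]
  set P := F * G * Fᵀ with hP
  have hPP : P * P = P := by
    conv_lhs => rw [hP]
    rw [← Matrix.mul_assoc, ← Matrix.mul_assoc, ← hP, hPF]
  have hFP : Fᵀ * P = Fᵀ := by
    have := congrArg Matrix.transpose hPF
    rwa [Matrix.transpose_mul, hS] at this
  clear_value P
  have e1 : Tᵀ * F * G * (Tᵀ * F)ᵀ = Tᵀ * P * T := by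
    rw [hP]; simp only [Matrix.transpose_mul, Matrix.transpose_transpose, Matrix.mul_assoc]
  have e2 : (P * T + x • F)ᵀ = Tᵀ * P + x • Fᵀ := by
    simp [Matrix.transpose_mul, hS]
  rw [e1, e2]
  have e3 : Tᵀ * P * (P * T) = Tᵀ * P * T := by
    rw [← Matrix.mul_assoc, Matrix.mul_assoc Tᵀ P P, hPP]
  have e4 : Tᵀ * P * F = Tᵀ * F := by rw [Matrix.mul_assoc, hPF]
  have e5 : Fᵀ * (P * T) = Fᵀ * T := by rw [← Matrix.mul_assoc, hFP]
  simp only [Matrix.mul_add, Matrix.add_mul, Matrix.smul_mul, Matrix.mul_smul, e3, e4, e5, smul_add, smul_smul]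
  rw [pow_two]
  abel

lemma aux_tr_nonneg (ht : 2 ≤ t) (N : Matrix n (Fin t) ℝ) :
    0 ≤ Matrix.trace (Bmat (Fin t) * (Nᵀ * N)) := by
  have h : Matrix.trace (Bmat (Fin t) * (Nᵀ * N))
      = Matrix.trace ((N * Bmat (Fin t))ᴴ * (N * Bmat (Fin t))) := by
    rw [Matrix.conjTranspose_eq_transpose_of_trivial, Matrix.transpose_mul, aux_B_symm]
    have : Bmat (Fin t) * Nᵀ * (N * Bmat (Fin t)) = (Bmat (Fin t) * (Nᵀ * N)) * Bmat (Fin t) := by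
      simp [Matrix.mul_assoc]
    rw [this, Matrix.trace_mul_comm (Bmat (Fin t) * (Nᵀ * N)), ← Matrix.mul_assoc (Bmat (Fin t)) (Bmat (Fin t)), aux_B_B ht]
  rw [h]
  exact (Matrix.posSemidef_conjTranspose_mul_self _).trace_nonneg

end Schur

/-! ### Stacked representation of the moment matrices -/

/-- Stack the matrices `√p_s L X_s`. -/
noncomputable def auxStack (L : Matrix (Plot a b) (Plot a b) ℝ) (ξ : BlockArray a b t → ℝ)
    (X : BlockArray a b t → Matrix (Plot a b) (Fin t) ℝ) :
    Matrix (BlockArray a b t × Plot a b) (Fin t) ℝ :=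
  Matrix.of fun sq k => Real.sqrt (ξ sq.1) * (L * X sq.1) sq.2 k

lemma aux_stack_mul (L : Matrix (Plot a b) (Plot a b) ℝ) {ξ : BlockArray a b t → ℝ}
    (hξ : ∀ s, 0 ≤ ξ s) (X Y : BlockArray a b t → Matrix (Plot a b) (Fin t) ℝ) :
    (auxStack L ξ X)ᵀ * auxStack L ξ Y = ∑ s, ξ s • ((X s)ᵀ * (Lᵀ * L) * Y s) := by
  ext i j
  have h : ∀ s, ((X s)ᵀ * (Lᵀ * L) * Y s) = (L * X s)ᵀ * (L * Y s) := fun s => by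
    simp [Matrix.transpose_mul, Matrix.mul_assoc]
  simp only [h]
  rw [Matrix.sum_apply, Matrix.mul_apply, Fintype.sum_prod_type]
  refine Finset.sum_congr rfl fun s _ => ?_
  rw [Matrix.smul_apply, Matrix.mul_apply, smul_eq_mul, Finset.mul_sum]
  refine Finset.sum_congr rfl fun q _ => ?_
  simp only [auxStack, Matrix.transpose_apply, Matrix.of_apply]
  have := Real.mul_self_sqrt (hξ s)
  linear_combination ((L * X s) q i * (L * Y s) q j) * this

open scoped MatrixOrder Matrix.Norms.L2Operator in
lemma aux_rep {W : Matrix (Plot a b) (Plot a b) ℝ} (hW : W.PosSemidef) {ξ : BlockArray a b t → ℝ}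
    (hξ : IsMeasure ξ) : ∃ T F : Matrix (BlockArray a b t × Plot a b) (Fin t) ℝ,
      Cm00 W ξ = Tᵀ * T ∧ Cm01 W ξ = Tᵀ * F ∧ Cm11 W ξ = Fᵀ * F := by
  obtain ⟨L, rfl⟩ : ∃ L : Matrix (Plot a b) (Plot a b) ℝ, W = Lᵀ * L := by
    obtain ⟨L, hL⟩ := CStarAlgebra.nonneg_iff_eq_star_mul_self.mp hW.nonneg
    exact ⟨L, by
      rw [hL, Matrix.star_eq_conjTranspose, Matrix.conjTranspose_eq_transpose_of_trivial]⟩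
  exact ⟨auxStack L ξ Tmat, auxStack L ξ Fmat, (aux_stack_mul L hξ.1 _ _).symm,
    (aux_stack_mul L hξ.1 _ _).symm, (aux_stack_mul L hξ.1 _ _).symm⟩

lemma aux_cm00 (W : Matrix (Plot a b) (Plot a b) ℝ) (ξ : BlockArray a b t → ℝ) :
    cm00 W ξ = Matrix.trace (Bmat (Fin t) * Cm00 W ξ) := by
  simp [cm00, Cm00, cs00, Matrix.mul_sum, Matrix.trace_sum]

lemma aux_cm01 (W : Matrix (Plot a b) (Plot a b) ℝ) (ξ : BlockArray a b t → ℝ) :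
    cm01 W ξ = Matrix.trace (Bmat (Fin t) * Cm01 W ξ) := by
  simp [cm01, Cm01, cs01, Matrix.mul_sum, Matrix.trace_sum]

lemma aux_cm11 (W : Matrix (Plot a b) (Plot a b) ℝ) (ξ : BlockArray a b t → ℝ) :
    cm11 W ξ = Matrix.trace (Bmat (Fin t) * Cm11 W ξ) := by
  simp [cm11, Cm11, cs11, Matrix.mul_sum, Matrix.trace_sum]

lemma aux_J_T {W : Matrix (Plot a b) (Plot a b) ℝ} (hJ : Jmat (Plot a b) * W = 0)
    (s : BlockArray a b t) : Jmat (Fin t) * (Tmat s)ᵀ * W = 0 := by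
  ext k q
  have h := congrFun (congrFun hJ q) q
  simp only [Matrix.mul_apply, Jmat, Matrix.of_apply, one_mul, Matrix.zero_apply] at h
  simp [Matrix.mul_apply, Jmat, Tmat, h]

lemma aux_J_Cm00 {W : Matrix (Plot a b) (Plot a b) ℝ} (hJ : Jmat (Plot a b) * W = 0)
    (ξ : BlockArray a b t → ℝ) : Jmat (Fin t) * Cm00 W ξ = 0 := by
  simp [Cm00, Matrix.mul_sum, Cs00, ← Matrix.mul_assoc, aux_J_T hJ]

lemma aux_J_Cm01 {W : Matrix (Plot a b) (Plot a b) ℝ} (hJ : Jmat (Plot a b) * W = 0)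
    (ξ : BlockArray a b t → ℝ) : Jmat (Fin t) * Cm01 W ξ = 0 := by
  simp [Cm01, Matrix.mul_sum, Cs01, ← Matrix.mul_assoc, aux_J_T hJ]

lemma aux_J_info {W : Matrix (Plot a b) (Plot a b) ℝ} (hJ : Jmat (Plot a b) * W = 0)
    (ξ : BlockArray a b t → ℝ) (G : Matrix (Fin t) (Fin t) ℝ) :
    Jmat (Fin t) * InfoMat W ξ G = 0 := by
  simp [InfoMat, mul_sub, ← Matrix.mul_assoc, aux_J_Cm00 hJ, aux_J_Cm01 hJ]

lemma aux_info_symm {W : Matrix (Plot a b) (Plot a b) ℝ} (hW : W.PosSemidef)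
    {ξ : BlockArray a b t → ℝ} (hξ : IsMeasure ξ) (G : Matrix (Fin t) (Fin t) ℝ)
    (hG : IsGenInv (Cm11 W ξ) G) : (InfoMat W ξ G).IsSymm := by
  obtain ⟨T, F, h00, h01, h11⟩ := aux_rep hW hξ
  rw [h11] at hG
  have hS := aux_P_symm F G hG
  have e : InfoMat W ξ G = Tᵀ * T - Tᵀ * (F * G * Fᵀ) * T := by
    simp [InfoMat, h00, h01, Matrix.mul_assoc]
  rw [e, Matrix.IsSymm, Matrix.transpose_sub, Matrix.transpose_mul, Matrix.transpose_mul _ T,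
    Matrix.transpose_mul Tᵀ, hS]
  simp [Matrix.mul_assoc]

lemma aux_cm11_nonneg (ht : 2 ≤ t) {W : Matrix (Plot a b) (Plot a b) ℝ} (hW : W.PosSemidef)
    {ξ : BlockArray a b t → ℝ} (hξ : IsMeasure ξ) : 0 ≤ cm11 W ξ := by
  obtain ⟨T, F, h00, h01, h11⟩ := aux_rep hW hξ
  rw [aux_cm11, h11]
  exact aux_tr_nonneg ht F

lemma aux_trB_of_J {A : Matrix (Fin t) (Fin t) ℝ} (h : Jmat (Fin t) * A = 0) :
    Matrix.trace (Bmat (Fin t) * A) = Matrix.trace A := by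
  simp [Bmat, sub_mul, h]

/-- The trace of any information matrix is at most `q_ξ(x)`. -/
lemma aux_info_trace_le (ht : 2 ≤ t) {W : Matrix (Plot a b) (Plot a b) ℝ} (hW : W.PosSemidef)
    (hJ : Jmat (Plot a b) * W = 0) {ξ : BlockArray a b t → ℝ} (hξ : IsMeasure ξ)
    (G : Matrix (Fin t) (Fin t) ℝ) (hG : IsGenInv (Cm11 W ξ) G) (x : ℝ) :
    Matrix.trace (InfoMat W ξ G) ≤ cm00 W ξ + 2 * cm01 W ξ * x + cm11 W ξ * x ^ 2 := by
  rw [← aux_trB_of_J (aux_J_info hJ ξ G)]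
  obtain ⟨T, F, h00, h01, h11⟩ := aux_rep hW hξ
  have hG' := hG
  rw [h11] at hG'
  have hs := aux_schur T F G hG' x
  have hn := aux_tr_nonneg ht (F * G * Fᵀ * T + x • F)
  rw [← hs] at hn
  have e : Matrix.trace (Bmat (Fin t) * (Fᵀ * T)) = Matrix.trace (Bmat (Fin t) * (Tᵀ * F)) := by
    rw [← Matrix.trace_transpose (Bmat (Fin t) * (Fᵀ * T)), Matrix.transpose_mul,
      Matrix.transpose_mul, Matrix.transpose_transpose, aux_B_symm, Matrix.trace_mul_comm]
  rw [aux_cm00, aux_cm01, aux_cm11, InfoMat, h00, h01, h11]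
  rw [mul_sub, Matrix.trace_sub] at hn
  simp only [mul_add, Matrix.mul_smul, Matrix.trace_add, Matrix.trace_smul, smul_eq_mul, e] at hn
  linarith

/-- Structure of a pseudo symmetric measure. -/
lemma aux_pseudo (ht : 2 ≤ t) {W : Matrix (Plot a b) (Plot a b) ℝ} (hW : W.PosSemidef)
    (hJ : Jmat (Plot a b) * W = 0) {ξ : BlockArray a b t → ℝ} (hξ : IsMeasure ξ)
    (hps : PseudoSym W ξ) :
    (cm11 W ξ = 0 → cm01 W ξ = 0) ∧
    ∀ G, IsGenInv (Cm11 W ξ) G →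
      InfoMat W ξ G = (qstar W ξ / ((t : ℝ) - 1)) • Bmat (Fin t) := by
  have ht2 : (2 : ℝ) ≤ t := by exact_mod_cast ht
  have ht1 : (t : ℝ) - 1 ≠ 0 := by linarith
  obtain ⟨h0, h1, h2⟩ := hps
  obtain ⟨G0, hG0⟩ := aux_geninv_compl ht h2
  obtain ⟨α0, e0, c0⟩ := aux_compl_zero ht h0 (aux_J_Cm00 hJ ξ)
  obtain ⟨α1, e1, c1⟩ := aux_compl_zero ht h1 (aux_J_Cm01 hJ ξ)
  obtain ⟨α2, β2, e2⟩ := h2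
  have c2 : cm11 W ξ = α2 * ((t : ℝ) - 1) := by rw [aux_cm11, e2, aux_trB_compl ht]
  rw [← aux_cm00] at c0
  rw [← aux_cm01] at c1
  have key : ∀ G, IsGenInv (Cm11 W ξ) G →
      α1 • Bmat (Fin t) = (α1 * α2) • (Bmat (Fin t) * G * Bmat (Fin t)) := by
    intro G hG
    obtain ⟨T, F, r00, r01, r11⟩ := aux_rep hW hξ
    have hG' := hG
    rw [r11] at hG'
    have hF := aux_FG F G hG'
    have h : Cm01 W ξ * G * Cm11 W ξ = Cm01 W ξ := by
      rw [r01, r11, Matrix.mul_assoc Tᵀ, Matrix.mul_assoc Tᵀ, hF]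
    have h' := congrArg (fun X => X * Bmat (Fin t)) h
    simp only [e1, e2] at h'
    rw [Matrix.mul_assoc _ _ (Bmat (Fin t))] at h'
    simp only [add_mul, Matrix.smul_mul, Matrix.mul_smul, aux_J_B ht, aux_B_B ht, one_mul,
      smul_zero, add_zero, smul_smul] at h'
    rw [← h', mul_comm]
  refine ⟨?_, ?_⟩
  · intro h
    have : α2 = 0 := by
      rw [c2] at h
      exact (mul_eq_zero.mp h).resolve_right ht1
    have k := key G0 hG0
    rw [this] at k
    simp only [mul_zero, zero_smul, smul_eq_zero, aux_B_ne ht, or_false] at k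
    rw [c1, k, zero_mul]
  · intro G hG
    have k := key G hG
    have hI : InfoMat W ξ G
        = α0 • Bmat (Fin t) - (α1 * α1) • (Bmat (Fin t) * G * Bmat (Fin t)) := by
      simp only [InfoMat, e0, e1, Matrix.transpose_smul, aux_B_symm, Matrix.smul_mul,
        Matrix.mul_smul, smul_smul]
    rw [hI, qstar, c0, c1, c2]
    by_cases hα1 : α1 = 0
    · subst hα1
      simp [ht1]
    · have hα2 : α2 ≠ 0 := by
        rintro rfl
        simp [hα1, aux_B_ne ht] at k
      have k2 : Bmat (Fin t) * G * Bmat (Fin t) = α2⁻¹ • Bmat (Fin t) := by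
        have k3 := congrArg (fun X => (α1 * α2)⁻¹ • X) k
        simp only [smul_smul] at k3
        rw [inv_mul_cancel₀ (mul_ne_zero hα1 hα2), one_smul] at k3
        rw [← k3]
        congr 1
        field_simp
      rw [k2, smul_smul, ← sub_smul]
      congr 1
      field_simp

/-! ### Symmetrization -/

lemma aux_trace_sub (A : Matrix (Fin t) (Fin t) ℝ) (σ : Equiv.Perm (Fin t)) :
    Matrix.trace (A.submatrix σ σ) = Matrix.trace A := by
  simp only [Matrix.trace, Matrix.diag, Matrix.submatrix_apply]
  exact Equiv.sum_comp σ (fun i => A i i)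

/-- Averaging over all permutations. -/
lemma aux_avg (ht : 2 ≤ t) {A : Matrix (Fin t) (Fin t) ℝ}
    (hJ : Jmat (Fin t) * A = 0) :
    ∑ σ : Equiv.Perm (Fin t), (Fintype.card (Equiv.Perm (Fin t)) : ℝ)⁻¹ • A.submatrix σ σ
      = (Matrix.trace A / ((t : ℝ) - 1)) • Bmat (Fin t) := by
  have ht2 : (2 : ℝ) ≤ t := by exact_mod_cast ht
  have ht1 : (t : ℝ) - 1 ≠ 0 := by linarith
  set N : ℝ := (Fintype.card (Equiv.Perm (Fin t)) : ℝ) with hN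
  have hN0 : N ≠ 0 := by rw [hN]; exact_mod_cast Fintype.card_ne_zero
  set V := ∑ σ : Equiv.Perm (Fin t), N⁻¹ • A.submatrix σ σ with hV
  have hinv : ∀ τ : Equiv.Perm (Fin t), V.submatrix τ τ = V := by
    intro τ
    ext i j
    simp only [hV, Matrix.submatrix_apply, Matrix.sum_apply, Matrix.smul_apply]
    exact Equiv.sum_comp (Equiv.mulRight τ) (fun σ => N⁻¹ • A (σ i) (σ j))
  have hJV : Jmat (Fin t) * V = 0 := by
    rw [hV, Matrix.mul_sum]
    refine Finset.sum_eq_zero fun σ _ => ?_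
    rw [Matrix.mul_smul]
    have : Jmat (Fin t) * A.submatrix σ σ = 0 := by
      have h1 : Jmat (Fin t) = (Jmat (Fin t)).submatrix σ σ := by ext; simp [Jmat]
      rw [h1, Matrix.submatrix_mul_equiv, hJ]
      rfl
    rw [this, smul_zero]
  obtain ⟨α, e, c⟩ := aux_compl_zero ht (aux_inv_compl ht hinv) hJV
  have htr : Matrix.trace V = Matrix.trace A := by
    rw [hV, Matrix.trace_sum]
    simp only [Matrix.trace_smul, aux_trace_sub]
    simp only [Finset.sum_const, Finset.card_univ, nsmul_eq_mul, smul_eq_mul]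
    rw [← hN]
    field_simp
  rw [aux_trB_of_J hJV, htr] at c
  rw [e, c]
  congr 1
  field_simp

lemma aux_phi_avg {Φ : Matrix (Fin t) (Fin t) ℝ → ℝ} (hΦ : GoodPhi t Φ)
    {A : Matrix (Fin t) (Fin t) ℝ} (hA : A.IsSymm) :
    Φ A ≤ Φ (∑ σ : Equiv.Perm (Fin t),
      (Fintype.card (Equiv.Perm (Fin t)) : ℝ)⁻¹ • A.submatrix σ σ) := by
  have hN0 : (Fintype.card (Equiv.Perm (Fin t)) : ℝ) ≠ 0 := by exact_mod_cast Fintype.card_ne_zero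
  have hc : ConcaveOn ℝ {A : Matrix (Fin t) (Fin t) ℝ | A.IsSymm} Φ := by
    refine ⟨?_, ?_⟩
    · intro A hA B hB u v _ _ _
      exact (hA.smul u).add (hB.smul v)
    · intro A hA B hB u v hu hv huv
      obtain rfl : v = 1 - u := by linarith
      exact hΦ.1 A B hA hB u hu (by linarith)
  have := hc.le_map_sum (t := Finset.univ)
    (w := fun _ : Equiv.Perm (Fin t) => (Fintype.card (Equiv.Perm (Fin t)) : ℝ)⁻¹)
    (p := fun σ => A.submatrix σ σ) (fun _ _ => by positivity)
    (by simp only [Finset.sum_const, Finset.card_univ, nsmul_eq_mul]; exact mul_inv_cancel₀ hN0)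
    (fun σ _ => hA.submatrix σ)
  refine le_trans (le_of_eq ?_) this
  simp only [hΦ.2.2, Finset.sum_const, Finset.card_univ, nsmul_eq_mul, smul_eq_mul]
  field_simp

lemma aux_T_perm (s : BlockArray a b t) (σ : Equiv.Perm (Fin t)) :
    Tmat (fun q => σ (s q)) = (Tmat s).submatrix id σ.symm := by
  ext q k
  simp [Tmat, Equiv.eq_symm_apply]

lemma aux_F_perm (s : BlockArray a b t) (σ : Equiv.Perm (Fin t)) :
    Fmat (fun q => σ (s q)) = (Fmat s).submatrix id σ.symm := by
  ext q k
  simp [Fmat, aux_T_perm, Matrix.mul_apply]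

lemma aux_C00_perm (W : Matrix (Plot a b) (Plot a b) ℝ) (s : BlockArray a b t)
    (σ : Equiv.Perm (Fin t)) :
    Cs00 W (fun q => σ (s q)) = (Cs00 W s).submatrix σ.symm σ.symm := by
  ext q k
  simp [Cs00, aux_T_perm, Matrix.mul_apply]

lemma aux_C01_perm (W : Matrix (Plot a b) (Plot a b) ℝ) (s : BlockArray a b t)
    (σ : Equiv.Perm (Fin t)) :
    Cs01 W (fun q => σ (s q)) = (Cs01 W s).submatrix σ.symm σ.symm := by
  ext q k
  simp [Cs01, aux_T_perm, aux_F_perm, Matrix.mul_apply]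

lemma aux_C11_perm (W : Matrix (Plot a b) (Plot a b) ℝ) (s : BlockArray a b t)
    (σ : Equiv.Perm (Fin t)) :
    Cs11 W (fun q => σ (s q)) = (Cs11 W s).submatrix σ.symm σ.symm := by
  ext q k
  simp [Cs11, aux_F_perm, Matrix.mul_apply]

/-- The relabeling action on block arrays as an equivalence. -/
def auxAct (σ : Equiv.Perm (Fin t)) : BlockArray a b t ≃ BlockArray a b t :=
  Equiv.arrowCongr (Equiv.refl _) σ

lemma auxAct_apply (σ : Equiv.Perm (Fin t)) (s : BlockArray a b t) :
    auxAct σ s = fun q => σ (s q) := rfl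

lemma aux_symm_compl (ht : 2 ≤ t) {η : BlockArray a b t → ℝ} (hη : IsSymmetricMeasure η)
    (C : BlockArray a b t → Matrix (Fin t) (Fin t) ℝ)
    (hC : ∀ s (σ : Equiv.Perm (Fin t)), C (fun q => σ (s q)) = (C s).submatrix σ.symm σ.symm) :
    ComplSym (∑ s, η s • C s) := by
  refine aux_inv_compl ht fun σ => ?_
  ext i j
  simp only [Matrix.submatrix_apply, Matrix.sum_apply, Matrix.smul_apply]
  rw [← Equiv.sum_comp (auxAct σ) (fun s => η s • C s (σ i) (σ j))]
  refine Finset.sum_congr rfl fun s _ => ?_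
  rw [auxAct_apply, hη σ s, hC]
  simp

lemma aux_symmetrize (ht : 2 ≤ t) (W : Matrix (Plot a b) (Plot a b) ℝ)
    {η : BlockArray a b t → ℝ} (hη : IsMeasure η) :
    ∃ ζ : BlockArray a b t → ℝ, IsMeasure ζ ∧ PseudoSym W ζ ∧
      cm00 W ζ = cm00 W η ∧ cm01 W ζ = cm01 W η ∧ cm11 W ζ = cm11 W η := by
  set N : ℝ := (Fintype.card (Equiv.Perm (Fin t)) : ℝ) with hN
  have hN0 : N ≠ 0 := by rw [hN]; exact_mod_cast Fintype.card_ne_zero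
  set ζ : BlockArray a b t → ℝ := fun s => ∑ σ : Equiv.Perm (Fin t), N⁻¹ * η (auxAct σ s) with hζ
  have hsum : ∀ c : BlockArray a b t → ℝ,
      (∀ s (σ : Equiv.Perm (Fin t)), c (auxAct σ s) = c s) → ∑ s, ζ s * c s = ∑ s, η s * c s := by
    intro c hc
    simp only [hζ, Finset.sum_mul]
    rw [Finset.sum_comm]
    have : ∀ σ : Equiv.Perm (Fin t), ∑ s, N⁻¹ * η (auxAct σ s) * c s = N⁻¹ * ∑ s, η s * c s := by
      intro σ
      rw [← Equiv.sum_comp (auxAct σ) (fun s => η s * c s), Finset.mul_sum]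
      refine Finset.sum_congr rfl fun s _ => ?_
      rw [hc, mul_assoc]
    simp only [this, Finset.sum_const, Finset.card_univ, nsmul_eq_mul]
    rw [← hN]
    field_simp
  have hsym : IsSymmetricMeasure ζ := by
    intro τ s
    simp only [hζ]
    exact Equiv.sum_comp (Equiv.mulRight τ) (fun σ => N⁻¹ * η (auxAct σ s))
  refine ⟨ζ, ⟨fun s => ?_, ?_⟩, ⟨?_, ?_, ?_⟩, ?_, ?_, ?_⟩
  · refine Finset.sum_nonneg fun σ _ => mul_nonneg ?_ (hη.1 _)
    rw [hN]; positivity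
  · have := hsum (fun _ => 1) (fun _ _ => rfl)
    simpa [hη.2] using this
  · exact aux_symm_compl ht hsym _ (aux_C00_perm W)
  · exact aux_symm_compl ht hsym _ (aux_C01_perm W)
  · exact aux_symm_compl ht hsym _ (aux_C11_perm W)
  · refine hsum _ fun s σ => ?_
    rw [auxAct_apply, cs00, aux_C00_perm, aux_trB_submatrix, cs00]
  · refine hsum _ fun s σ => ?_
    rw [auxAct_apply, cs01, aux_C01_perm, aux_trB_submatrix, cs01]
  · refine hsum _ fun s σ => ?_
    rw [auxAct_apply, cs11, aux_C11_perm, aux_trB_submatrix, cs11]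

/-! ### One-sided optimality condition for a maximum of quadratics -/

lemma aux_active {S : Type*} [Finite S] (c0 c1 c2 : S → ℝ) (x0 M : ℝ)
    (h1 : ∀ s, c0 s + 2 * c1 s * x0 + c2 s * x0 ^ 2 ≤ M)
    (h2 : ∀ y, ∃ s, M ≤ c0 s + 2 * c1 s * y + c2 s * y ^ 2) :
    ∃ s, c0 s + 2 * c1 s * x0 + c2 s * x0 ^ 2 = M ∧ 0 ≤ c1 s + x0 * c2 s := by
  by_contra! hcon
  have hev : ∀ᶠ e : ℝ in nhdsWithin 0 (Set.Ioi 0),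
      ∀ s, c0 s + 2 * c1 s * (x0 + e) + c2 s * (x0 + e) ^ 2 < M := by
    rw [Filter.eventually_all]
    intro s
    rcases (h1 s).lt_or_eq with hlt | heq
    · have hcont : Continuous fun e : ℝ => c0 s + 2 * c1 s * (x0 + e) + c2 s * (x0 + e) ^ 2 := by
        fun_prop
      have := (hcont.tendsto 0).eventually (gt_mem_nhds (show _ < M by simpa using hlt))
      exact this.filter_mono nhdsWithin_le_nhds
    · have hd := hcon s heq
      have hcont : Continuous fun e : ℝ => 2 * (c1 s + x0 * c2 s) + e * c2 s := by fun_prop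
      have := (hcont.tendsto 0).eventually (gt_mem_nhds (show _ < (0 : ℝ) by linarith))
      filter_upwards [this.filter_mono nhdsWithin_le_nhds, self_mem_nhdsWithin] with e he hpos
      have hpos' : 0 < e := hpos
      have := mul_neg_of_pos_of_neg hpos' he
      nlinarith
  obtain ⟨e, he⟩ := hev.exists
  obtain ⟨s, hs⟩ := h2 (x0 + e)
  exact absurd (he s) (not_lt.mpr hs)

/-- There is a measure attaining the minimax value. -/
lemma aux_exists {W : Matrix (Plot a b) (Plot a b) ℝ} {x0 M : ℝ}
    (h1 : ∀ s : BlockArray a b t, qpoly W s x0 ≤ M)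
    (h2 : ∀ y, ∃ s : BlockArray a b t, M ≤ qpoly W s y) :
    ∃ η : BlockArray a b t → ℝ, IsMeasure η ∧ cm01 W η + x0 * cm11 W η = 0 ∧
      cm00 W η + 2 * cm01 W η * x0 + cm11 W η * x0 ^ 2 = M := by
  classical
  obtain ⟨s1, e1, d1⟩ := aux_active (fun s : BlockArray a b t => cs00 W s) (fun s => cs01 W s)
    (fun s => cs11 W s) x0 M h1 h2
  obtain ⟨s2, e2, d2⟩ := aux_active (fun s : BlockArray a b t => cs00 W s) (fun s => - cs01 W s)
    (fun s => cs11 W s) (-x0) M (fun s => by have := h1 s; simp only [qpoly] at this; linarith)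
    (fun y => by
      obtain ⟨s, hs⟩ := h2 (-y)
      refine ⟨s, ?_⟩
      simp only [qpoly] at hs
      linarith)
  set u := cs01 W s1 + x0 * cs11 W s1 with hu
  set v := cs01 W s2 + x0 * cs11 W s2 with hv
  have hv0 : v ≤ 0 := by linarith
  obtain ⟨w, hw0, hw1, hw⟩ : ∃ w : ℝ, 0 ≤ w ∧ w ≤ 1 ∧ w * u + (1 - w) * v = 0 := by
    by_cases h : u - v = 0
    · exact ⟨1, by norm_num, le_refl _, by linarith⟩
    · have hp : 0 < u - v := lt_of_le_of_ne (by linarith) (Ne.symm h)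
      refine ⟨-v / (u - v), div_nonneg (by linarith) hp.le, ?_, ?_⟩
      · rw [div_le_one hp]; linarith
      · field_simp; ring
  have hsum : ∀ c : BlockArray a b t → ℝ,
      ∑ s, (w * (if s = s1 then 1 else 0) + (1 - w) * (if s = s2 then 1 else 0)) * c s
        = w * c s1 + (1 - w) * c s2 := by
    intro c
    simp [add_mul, Finset.sum_add_distrib]
  refine ⟨fun s => w * (if s = s1 then 1 else 0) + (1 - w) * (if s = s2 then 1 else 0),
    ⟨fun s => ?_, ?_⟩, ?_, ?_⟩
  · have : 0 ≤ 1 - w := by linarith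
    positivity
  · simpa using hsum (fun _ => 1)
  · rw [cm01, cm11, hsum, hsum]
    linear_combination hw
  · rw [cm00, cm01, cm11, hsum, hsum, hsum]
    linear_combination w * e1 + (1 - w) * e2

/-! ### Properties of `B̃` -/

lemma aux_Btilde (ha : 2 ≤ a) (hb : 3 ≤ b) {Sig : Matrix (Plot a b) (Plot a b) ℝ}
    (hSig : Sig.PosDef) :
    (Btilde Sig).PosSemidef ∧ Jmat (Plot a b) * Btilde Sig = 0 := by
  have hS : (Sig⁻¹).PosDef := hSig.inv
  set S := Sig⁻¹ with hSdef
  set k : ℝ := ∑ i, ∑ j, S i j with hk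
  have hkpos : 0 < k := by
    have hne : (fun _ : Plot a b => (1 : ℝ)) ≠ 0 := by
      intro h
      have := congrFun h (⟨0, by omega⟩, ⟨0, by omega⟩)
      simp at this
    have := hS.dotProduct_mulVec_pos hne
    simpa [dotProduct, Matrix.mulVec, hk] using this
  have hST : Sᵀ = S := by
    have := hS.isHermitian.eq
    rwa [Matrix.conjTranspose_eq_transpose_of_trivial] at this
  have hJT : (Jmat (Plot a b))ᵀ = Jmat (Plot a b) := by ext; simp [Jmat]
  have hJSJ : Jmat (Plot a b) * S * Jmat (Plot a b) = k • Jmat (Plot a b) := by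
    ext i j
    simp only [Matrix.mul_apply, Jmat, Matrix.of_apply, one_mul, mul_one, Matrix.smul_apply,
      smul_eq_mul, hk]
    exact Finset.sum_comm
  have hB : Btilde Sig = S - k⁻¹ • (S * Jmat (Plot a b) * S) := rfl
  have hJSJS : Jmat (Plot a b) * (S * Jmat (Plot a b) * S) = k • (Jmat (Plot a b) * S) := by
    rw [← Matrix.mul_assoc, ← Matrix.mul_assoc, hJSJ, Matrix.smul_mul]
  refine ⟨?_, ?_⟩
  · have h := hS.posSemidef.conjTranspose_mul_mul_same (1 - k⁻¹ • (Jmat (Plot a b) * S))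
    convert h using 1
    rw [hB, Matrix.conjTranspose_eq_transpose_of_trivial, Matrix.transpose_sub,
      Matrix.transpose_smul, Matrix.transpose_mul, hST, hJT, Matrix.transpose_one]
    have e : S * Jmat (Plot a b) * S * (Jmat (Plot a b) * S) = k • (S * Jmat (Plot a b) * S) := by
      have : S * Jmat (Plot a b) * S * (Jmat (Plot a b) * S)
          = S * (Jmat (Plot a b) * (S * Jmat (Plot a b) * S)) := by simp only [Matrix.mul_assoc]
      rw [this, hJSJS, Matrix.mul_smul, ← Matrix.mul_assoc]
    simp only [sub_mul, mul_sub, one_mul, mul_one, Matrix.smul_mul, Matrix.mul_smul, e, smul_smul]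
    rw [inv_mul_cancel₀ hkpos.ne', mul_one, ← Matrix.mul_assoc]
    abel
  · rw [hB, mul_sub, Matrix.mul_smul, hJSJS, smul_smul, inv_mul_cancel₀ hkpos.ne', one_smul,
      sub_self]

open scoped Classical in
/-- Theorem `corol`: a pseudo symmetric measure is universally optimal iff
`Σ_{s∈Q} p_s (c_{s01} + x* c_{s11}) = 0` and `p_s = 0` for `s ∉ Q`. -/
theorem pseudoSym_univOptimal_iff_linear_eq
    (a b t : ℕ) (ha : 2 ≤ a) (hab : a ≤ b) (hb : 3 ≤ b) (ht : 2 ≤ t)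
    (Sig : Matrix (Plot a b) (Plot a b) ℝ) (hSig : Sig.PosDef)
    (xstar ystar : ℝ)
    (hx : ∀ y : ℝ, rfun t (Btilde Sig) xstar ≤ rfun t (Btilde Sig) y)
    (hy : ystar = rfun t (Btilde Sig) xstar)
    (ξ : BlockArray a b t → ℝ) (hξ : IsMeasure ξ) (hps : PseudoSym (Btilde Sig) ξ) :
    UnivOptimal (Btilde Sig) ξ ↔
      ((∑ s ∈ Finset.univ.filter
            (fun s : BlockArray a b t => qpoly (Btilde Sig) s xstar = ystar),
          ξ s * (cs01 (Btilde Sig) s + xstar * cs11 (Btilde Sig) s)) = 0 ∧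
       ∀ s : BlockArray a b t, qpoly (Btilde Sig) s xstar ≠ ystar → ξ s = 0) := by
  obtain ⟨hW, hJ⟩ := aux_Btilde ha hb hSig
  set W := Btilde Sig with hWdef
  have ht2 : (2 : ℝ) ≤ t := by exact_mod_cast ht
  have ht1 : 0 < (t : ℝ) - 1 := by linarith
  haveI : Nonempty (Fin t) := ⟨⟨0, by omega⟩⟩
  have hfin : ∀ x, (Set.range fun s : BlockArray a b t => qpoly W s x).Finite :=
    fun x => Set.finite_range _
  have h1 : ∀ s : BlockArray a b t, qpoly W s xstar ≤ ystar := by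
    intro s
    rw [hy]
    exact le_csSup (hfin xstar).bddAbove ⟨s, rfl⟩
  have h2 : ∀ y, ∃ s : BlockArray a b t, ystar ≤ qpoly W s y := by
    intro y
    obtain ⟨s, hs⟩ := (Set.range_nonempty fun s : BlockArray a b t => qpoly W s y).csSup_mem
      (hfin y)
    refine ⟨s, ?_⟩
    rw [hy]
    refine (hx y).trans (le_of_eq ?_)
    exact hs.symm
  have hq : ∀ η : BlockArray a b t → ℝ,
      cm00 W η + 2 * cm01 W η * xstar + cm11 W η * xstar ^ 2 = ∑ s, η s * qpoly W s xstar := by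
    intro η
    simp only [cm00, cm01, cm11, qpoly, Finset.sum_mul, Finset.mul_sum, ← Finset.sum_add_distrib]
    exact Finset.sum_congr rfl fun s _ => by ring
  have hqle : ∀ η : BlockArray a b t → ℝ, IsMeasure η →
      cm00 W η + 2 * cm01 W η * xstar + cm11 W η * xstar ^ 2 ≤ ystar := by
    intro η hη
    rw [hq]
    calc ∑ s, η s * qpoly W s xstar ≤ ∑ s, η s * ystar :=
          Finset.sum_le_sum fun s _ => mul_le_mul_of_nonneg_left (h1 s) (hη.1 s)
      _ = ystar := by rw [← Finset.sum_mul, hη.2, one_mul]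
  have hqs : ∀ η : BlockArray a b t → ℝ, cm01 W η + xstar * cm11 W η = 0 →
      qstar W η = cm00 W η + 2 * cm01 W η * xstar + cm11 W η * xstar ^ 2 := by
    intro η h
    have h01 : cm01 W η = - (xstar * cm11 W η) := by linarith
    rw [qstar, h01]
    by_cases h0 : cm11 W η = 0
    · simp [h0]
    · field_simp; ring
  obtain ⟨hz, hinfo⟩ := aux_pseudo ht hW hJ hξ hps
  have hlin : (∀ s : BlockArray a b t, qpoly W s xstar ≠ ystar → ξ s = 0) →
      (∑ s ∈ Finset.univ.filter (fun s : BlockArray a b t => qpoly W s xstar = ystar),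
          ξ s * (cs01 W s + xstar * cs11 W s)) = cm01 W ξ + xstar * cm11 W ξ := by
    intro hsupp
    rw [Finset.sum_filter_of_ne]
    · simp only [cm01, cm11, Finset.mul_sum, ← Finset.sum_add_distrib]
      exact Finset.sum_congr rfl fun s _ => by ring
    · intro s _ hne
      by_contra hc
      exact hne (by rw [hsupp s hc, zero_mul])
  constructor
  · intro hopt
    obtain ⟨η0, hη0, hd, hv⟩ := aux_exists h1 h2
    obtain ⟨η, hη, hηps, e0, e1, e2⟩ := aux_symmetrize ht W hη0
    have hηq : qstar W η = ystar := by
      rw [hqs η (by rw [e1, e2]; exact hd), e0, e1, e2, hv]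
    obtain ⟨G, hG⟩ := aux_geninv_compl ht hps.2.2
    obtain ⟨H, hH⟩ := aux_geninv_compl ht hηps.2.2
    have htrace : GoodPhi t Matrix.trace := by
      refine ⟨?_, ?_, ?_⟩
      · intro A B _ _ α _ _
        simp [Matrix.trace_add, Matrix.trace_smul]
      · intro A B _ _ hAB
        have := hAB.trace_nonneg
        rw [Matrix.trace_sub] at this
        linarith
      · intro σ C
        exact aux_trace_sub C σ
    have hle := hopt η hη G H hG hH _ htrace
    rw [hinfo G hG, (aux_pseudo ht hW hJ hη hηps).2 H hH, hηq, Matrix.trace_smul,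
      Matrix.trace_smul, aux_tr_B ht, smul_eq_mul, smul_eq_mul, div_mul_cancel₀ _ ht1.ne',
      div_mul_cancel₀ _ ht1.ne'] at hle
    have hub := hqle ξ hξ
    have hnn := aux_cm11_nonneg ht hW hξ
    have hstat : cm01 W ξ + xstar * cm11 W ξ = 0 := by
      by_cases h0 : cm11 W ξ = 0
      · rw [h0, hz h0]; ring
      · have hp : 0 < cm11 W ξ := lt_of_le_of_ne hnn (Ne.symm h0)
        have : cm00 W ξ + 2 * cm01 W ξ * xstar + cm11 W ξ * xstar ^ 2 - qstar W ξ
            = (cm01 W ξ + xstar * cm11 W ξ) ^ 2 / cm11 W ξ := by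
          rw [qstar]; field_simp; ring
        have h3 : (cm01 W ξ + xstar * cm11 W ξ) ^ 2 / cm11 W ξ ≤ 0 := by linarith
        rw [div_le_iff₀ hp, zero_mul] at h3
        exact pow_eq_zero_iff (two_ne_zero) |>.mp (le_antisymm h3 (sq_nonneg _))
    have heq : ∑ s, ξ s * (ystar - qpoly W s xstar) = 0 := by
      have h3 := hqs ξ hstat
      have h4 : ∑ s, ξ s * qpoly W s xstar = ystar := by
        rw [← hq]; linarith
      simp only [mul_sub, Finset.sum_sub_distrib, h4]
      rw [← Finset.sum_mul, hξ.2]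
      ring
    have hsupp : ∀ s : BlockArray a b t, qpoly W s xstar ≠ ystar → ξ s = 0 := by
      intro s hs
      rw [Finset.sum_eq_zero_iff_of_nonneg
        (fun s _ => mul_nonneg (hξ.1 s) (sub_nonneg.mpr (h1 s)))] at heq
      have := heq s (Finset.mem_univ s)
      refine (mul_eq_zero.mp this).resolve_right ?_
      intro h
      exact hs (by linarith)
    exact ⟨by rw [hlin hsupp]; exact hstat, hsupp⟩
  · rintro ⟨hsum, hsupp⟩
    rw [hlin hsupp] at hsum
    have hξq : qstar W ξ = ystar := by
      rw [hqs ξ hsum, hq]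
      have : ∀ s, ξ s * qpoly W s xstar = ξ s * ystar := by
        intro s
        by_cases h : qpoly W s xstar = ystar
        · rw [h]
        · rw [hsupp s h]; ring
      rw [Finset.sum_congr rfl fun s _ => this s, ← Finset.sum_mul, hξ.2, one_mul]
    intro η hη G H hG hH Φ hΦ
    have hsymm := aux_info_symm hW hη H hH
    refine (aux_phi_avg hΦ hsymm).trans ?_
    rw [aux_avg ht (aux_J_info hJ η H), hinfo G hG, hξq]
    have hBs : (Bmat (Fin t)).IsSymm := aux_B_symm
    refine hΦ.2.1 _ _ (hBs.smul _) (hBs.smul _) ?_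
    rw [← sub_smul, ← sub_div]
    refine (aux_B_psd ht).smul (div_nonneg ?_ ht1.le)
    have := aux_info_trace_le ht hW hJ hη H hH xstar
    have := hqle η hη
    linarith

end TwoDim
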